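/- Fix t and let a, c, d, κ, κ′ be real numbers with a ≠ 0, κ > 0, let ω₀ > 0, C₀ = ω₀²/4, θ = (κ′ − (c+d)κ)/(4aκ), ε = √(ω₀/2)/κ, and Cₙ = (ε/(√π·2ⁿ·n!))^{1/2}. Define Ψₙ(x) = Cₙ·exp(iθx²)·exp(−ε²x²/2)·Hₙ(εx) with Hₙ the n-th physicists' Hermite polynomial, and let â, â† be the operators (â f)(x) = (√ω₀/(2κ) − i(κ′ − (c+d)κ)/(2a√ω₀)) x f(x) + (κ/√ω₀) f′(x), (â† f)(x) = (√ω₀/(2κ) + i(κ′ − (c+d)κ)/(2a√ω₀)) x f(x) − (κ/√ω₀) f′(x). Then for every n ≥ 1, âΨₙ = √n·Ψₙ₋₁, and for every n ≥ 0, â†Ψₙ = √(n+1)·Ψₙ₊₁ (pointwise on ℝ). -/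

import Mathlib

/-- The physicists' Hermite polynomials: H₀ = 1, Hₙ₊₁(ξ) = 2ξHₙ(ξ) − Hₙ′(ξ). -/
noncomputable def physHermite : ℕ → Polynomial ℝ
  | 0 => 1
  | n + 1 => 2 * Polynomial.X * physHermite n - Polynomial.derivative (physHermite n)

/-- Hₙ(x), the n-th physicists' Hermite polynomial evaluated at x. -/
noncomputable def pH (n : ℕ) (x : ℝ) : ℝ := (physHermite n).eval x

/-- θ = (κ′ − (c+d)κ)/(4aκ). -/
noncomputable def theta10 (a c d κ κ' : ℝ) : ℝ := (κ' - (c + d) * κ) / (4 * a * κ)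

/-- ε = √(ω₀/2)/κ. -/
noncomputable def eps10 (κ ω₀ : ℝ) : ℝ := Real.sqrt (ω₀ / 2) / κ

/-- Cₙ = (ε/(√π·2ⁿ·n!))^{1/2}. -/
noncomputable def Cconst10 (κ ω₀ : ℝ) (n : ℕ) : ℝ :=
  Real.sqrt (eps10 κ ω₀ / (Real.sqrt Real.pi * 2 ^ n * (n.factorial : ℝ)))

/-- Ψₙ(x) = Cₙ·exp(iθx²)·exp(−ε²x²/2)·Hₙ(εx). -/
noncomputable def Psi10 (a c d κ κ' ω₀ : ℝ) (n : ℕ) (x : ℝ) : ℂ :=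
  (Cconst10 κ ω₀ n : ℂ) *
    Complex.exp (Complex.I * (theta10 a c d κ κ' : ℂ) * (x : ℂ) ^ 2) *
    (Real.exp (-(eps10 κ ω₀) ^ 2 * x ^ 2 / 2) : ℂ) * (pH n (eps10 κ ω₀ * x) : ℂ)

/-- The annihilation operator
â f = (√ω₀/(2κ) − i(κ′ − (c+d)κ)/(2a√ω₀)) x f + (κ/√ω₀) f′. -/
noncomputable def ahat (ω₀ a c d κ κ' : ℝ) (f : ℝ → ℂ) (x : ℝ) : ℂ :=
  ((Real.sqrt ω₀ / (2 * κ) : ℝ)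
      - Complex.I * (((κ' - (c + d) * κ) / (2 * a * Real.sqrt ω₀) : ℝ))) * (x : ℂ) * f x
    + ((κ / Real.sqrt ω₀ : ℝ)) * deriv f x

/-- The creation operator
â† f = (√ω₀/(2κ) + i(κ′ − (c+d)κ)/(2a√ω₀)) x f − (κ/√ω₀) f′. -/
noncomputable def adag (ω₀ a c d κ κ' : ℝ) (f : ℝ → ℂ) (x : ℝ) : ℂ :=
  ((Real.sqrt ω₀ / (2 * κ) : ℝ)
      + Complex.I * (((κ' - (c + d) * κ) / (2 * a * Real.sqrt ω₀) : ℝ))) * (x : ℂ) * f x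
    - ((κ / Real.sqrt ω₀ : ℝ)) * deriv f x

/-!
With `β = iθ - ε²/2` one has `Ψₙ(x) = exp(βx²) φₙ(εx)`, where `φₙ = Cₙ Hₙ`. The ladder operators
are `√2 ε â = ∂ - 2βx` and `√2 ε â† = -(∂ + 2β̄x)`. Since `∂` acts on `exp(βx²) f` as `∂ + 2βx`
acts on `f` and `-2(β + β̄) = 2ε²`, in the variable `ξ = εx` they become `√2 â = d/dξ` and
`√2 â† = 2ξ - d/dξ` on the factor `φₙ`. The claim is thus the pair of relations
`Hₙ′ = 2n Hₙ₋₁`, `2ξHₙ - Hₙ′ = Hₙ₊₁`, normalized by `Cₙ = √(2(n+1)) Cₙ₊₁`.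
-/

open Complex (I)
open Polynomial (derivative)
open scoped ComplexConjugate

theorem physHermite_succ (n : ℕ) :
    physHermite (n + 1) = 2 * Polynomial.X * physHermite n - derivative (physHermite n) :=
  rfl

theorem derivative_physHermite_succ (n : ℕ) :
    derivative (physHermite (n + 1)) = 2 * ((n : Polynomial ℝ) + 1) * physHermite n := by
  induction n with
  | zero => simp [physHermite]
  | succ n ih =>
    have derivative_rhs : derivative (2 * ((n : Polynomial ℝ) + 1) * physHermite n)
        = 2 * ((n : Polynomial ℝ) + 1) * derivative (physHermite n) := by
      simp [Polynomial.derivative_mul]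
    calc derivative (physHermite (n + 2))
        = 2 * physHermite (n + 1) + 2 * Polynomial.X * derivative (physHermite (n + 1))
            - derivative (derivative (physHermite (n + 1))) := by
          simp [physHermite_succ (n + 1), Polynomial.derivative_mul]
      _ = 2 * physHermite (n + 1) + 2 * ((n : Polynomial ℝ) + 1)
            * (2 * Polynomial.X * physHermite n - derivative (physHermite n)) := by
          rw [ih, derivative_rhs]; ring
      _ = 2 * (((n + 1 : ℕ) : Polynomial ℝ) + 1) * physHermite (n + 1) := by
          rw [← physHermite_succ]; push_cast; ring

theorem differentiable_pH (n : ℕ) : Differentiable ℝ (pH n) :=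
  (physHermite n).differentiable

theorem deriv_pH_succ (n : ℕ) (ξ : ℝ) : deriv (pH (n + 1)) ξ = 2 * (n + 1) * pH n ξ := by
  unfold pH
  simp [derivative_physHermite_succ]

theorem pH_succ (n : ℕ) (ξ : ℝ) : pH (n + 1) ξ = 2 * ξ * pH n ξ - deriv (pH n) ξ := by
  unfold pH
  simp [physHermite_succ]

section Amplitude

variable (κ ω₀ : ℝ) (n : ℕ) (ξ : ℝ)

theorem Cconst10_eq_sqrt_mul_succ :
    Cconst10 κ ω₀ n = √2 * √(n + 1) * Cconst10 κ ω₀ (n + 1) := by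
  unfold Cconst10
  rw [← Real.sqrt_mul (by positivity), ← Real.sqrt_mul (by positivity), Nat.factorial_succ]
  congr 1
  push_cast
  field_simp
  ring

/-- `φₙ(ξ) = Cₙ Hₙ(ξ)`, the polynomial factor of `Ψₙ` in the rescaled variable `ξ = εx`. -/
noncomputable def psiAmplitude : ℝ := Cconst10 κ ω₀ n * pH n ξ

theorem differentiable_psiAmplitude : Differentiable ℝ (psiAmplitude κ ω₀ n) :=
  (differentiable_pH n).const_mul _

theorem deriv_psiAmplitude :
    deriv (psiAmplitude κ ω₀ n) ξ = Cconst10 κ ω₀ n * deriv (pH n) ξ :=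
  deriv_const_mul _ (differentiable_pH n ξ)

theorem deriv_psiAmplitude_succ :
    deriv (psiAmplitude κ ω₀ (n + 1)) ξ = √2 * (√(n + 1) * psiAmplitude κ ω₀ n ξ) := by
  have sq_sqrt_two : √2 ^ 2 = (2 : ℝ) := Real.sq_sqrt zero_le_two
  have sq_sqrt_succ : √(n + 1 : ℝ) ^ 2 = n + 1 := Real.sq_sqrt (by positivity)
  calc deriv (psiAmplitude κ ω₀ (n + 1)) ξ
      = Cconst10 κ ω₀ (n + 1) * (2 * (n + 1) * pH n ξ) := by
        rw [deriv_psiAmplitude, deriv_pH_succ]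
    _ = Cconst10 κ ω₀ (n + 1) * (√2 ^ 2 * √(n + 1) ^ 2 * pH n ξ) := by
        rw [sq_sqrt_two, sq_sqrt_succ]
    _ = √2 * (√(n + 1) * psiAmplitude κ ω₀ n ξ) := by
        rw [psiAmplitude, Cconst10_eq_sqrt_mul_succ κ ω₀ n]; ring

theorem two_mul_psiAmplitude_sub_deriv :
    2 * ξ * psiAmplitude κ ω₀ n ξ - deriv (psiAmplitude κ ω₀ n) ξ
      = √2 * (√(n + 1) * psiAmplitude κ ω₀ (n + 1) ξ) := by
  calc 2 * ξ * psiAmplitude κ ω₀ n ξ - deriv (psiAmplitude κ ω₀ n) ξ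
      = Cconst10 κ ω₀ n * pH (n + 1) ξ := by
        rw [deriv_psiAmplitude, pH_succ, psiAmplitude]; ring
    _ = √2 * (√(n + 1) * psiAmplitude κ ω₀ (n + 1) ξ) := by
        rw [psiAmplitude, Cconst10_eq_sqrt_mul_succ]; ring

end Amplitude

theorem hasDerivAt_cexp_sq_mul {f : ℝ → ℂ} {f' : ℂ} {x : ℝ} (β : ℂ) (hf : HasDerivAt f f' x) :
    HasDerivAt (fun y : ℝ ↦ Complex.exp (β * y ^ 2) * f y)
      (Complex.exp (β * x ^ 2) * (2 * β * x * f x + f')) x := by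
  have hexp : HasDerivAt (fun y : ℝ ↦ Complex.exp (β * y ^ 2))
      (Complex.exp (β * x ^ 2) * (β * (2 * x))) x := by
    simpa using (((hasDerivAt_id x).ofReal_comp.pow 2).const_mul β).cexp
  exact (hexp.mul hf).congr_deriv (by ring)

/-- The complex exponent `β = iθ - ε²/2` for which `exp(βx²)` is the phase of `Ψₙ` times its
Gaussian envelope. -/
noncomputable def psiExponent (a c d κ κ' ω₀ : ℝ) : ℂ :=
  I * theta10 a c d κ κ' - (eps10 κ ω₀ : ℂ) ^ 2 / 2

theorem Psi10_eq_cexp_mul_psiAmplitude (a c d κ κ' ω₀ : ℝ) (n : ℕ) :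
    Psi10 a c d κ κ' ω₀ n = fun x : ℝ ↦
      Complex.exp (psiExponent a c d κ κ' ω₀ * x ^ 2)
        * (psiAmplitude κ ω₀ n (eps10 κ ω₀ * x) : ℂ) := by
  funext x
  have exponent_split : psiExponent a c d κ κ' ω₀ * x ^ 2
      = I * theta10 a c d κ κ' * x ^ 2
        + ((-(eps10 κ ω₀) ^ 2 * x ^ 2 / 2 : ℝ) : ℂ) := by
    rw [psiExponent]; push_cast; ring
  rw [exponent_split, Complex.exp_add, Psi10, psiAmplitude]
  push_cast
  ring

theorem conj_psiExponent (a c d κ κ' ω₀ : ℝ) :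
    conj (psiExponent a c d κ κ' ω₀)
      = -(I * theta10 a c d κ κ') - (eps10 κ ω₀ : ℂ) ^ 2 / 2 := by
  simp [psiExponent, map_ofNat]

theorem psiExponent_add_conj (a c d κ κ' ω₀ : ℝ) :
    psiExponent a c d κ κ' ω₀ + conj (psiExponent a c d κ κ' ω₀) = -(eps10 κ ω₀ : ℂ) ^ 2 := by
  rw [conj_psiExponent, psiExponent]
  ring

section Coefficients

variable {κ ω₀ : ℝ}

theorem eps10_pos (hκ : 0 < κ) (hω₀ : 0 < ω₀) : 0 < eps10 κ ω₀ := by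
  unfold eps10
  positivity

theorem sqrt_eq_sqrt_two_mul_eps10_mul (hκ : κ ≠ 0) : √ω₀ = √2 * eps10 κ ω₀ * κ := by
  rw [eps10, Real.sqrt_div' _ zero_le_two]
  field_simp

theorem div_sqrt_eq_inv_sqrt_two_mul_eps10 (hκ : κ ≠ 0) : κ / √ω₀ = (√2 * eps10 κ ω₀)⁻¹ := by
  rw [sqrt_eq_sqrt_two_mul_eps10_mul hκ, div_mul_cancel_right₀ hκ]

theorem sqrt_div_two_mul_eq_inv_mul_eps10_sq (hκ : κ ≠ 0) :
    √ω₀ / (2 * κ) = (√2 * eps10 κ ω₀)⁻¹ * eps10 κ ω₀ ^ 2 := by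
  have sq_sqrt_two : √2 ^ 2 = (2 : ℝ) := Real.sq_sqrt zero_le_two
  rw [sqrt_eq_sqrt_two_mul_eps10_mul hκ]
  field_simp
  rw [sq_sqrt_two, mul_comm]

theorem sub_div_eq_inv_mul_two_mul_theta10 (a c d κ' : ℝ) (hκ : κ ≠ 0) :
    (κ' - (c + d) * κ) / (2 * a * √ω₀)
      = (√2 * eps10 κ ω₀)⁻¹ * (2 * theta10 a c d κ κ') := by
  rw [sqrt_eq_sqrt_two_mul_eps10_mul hκ, theta10]
  field_simp
  norm_num

end Coefficients

section Ladder

variable {κ : ℝ} (a c d κ' ω₀ : ℝ) (f : ℝ → ℂ) (x : ℝ)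

theorem ahat_eq_deriv_sub (hκ : κ ≠ 0) :
    ahat ω₀ a c d κ κ' f x
      = (√2 * eps10 κ ω₀ : ℂ)⁻¹ * (deriv f x - 2 * psiExponent a c d κ κ' ω₀ * x * f x) := by
  rw [ahat, sqrt_div_two_mul_eq_inv_mul_eps10_sq hκ,
    sub_div_eq_inv_mul_two_mul_theta10 a c d κ' hκ,
    div_sqrt_eq_inv_sqrt_two_mul_eps10 hκ, psiExponent]
  push_cast
  ring

theorem adag_eq_neg_deriv_add (hκ : κ ≠ 0) :
    adag ω₀ a c d κ κ' f x
      = -(√2 * eps10 κ ω₀ : ℂ)⁻¹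
        * (deriv f x + 2 * conj (psiExponent a c d κ κ' ω₀) * x * f x) := by
  rw [adag, sqrt_div_two_mul_eq_inv_mul_eps10_sq hκ,
    sub_div_eq_inv_mul_two_mul_theta10 a c d κ' hκ,
    div_sqrt_eq_inv_sqrt_two_mul_eps10 hκ, conj_psiExponent]
  push_cast
  ring

end Ladder

section Conjugation

variable {κ ω₀ : ℝ} {φ : ℝ → ℂ} {φ' : ℂ} {x : ℝ}

theorem deriv_cexp_sq_mul_comp_mul (β : ℂ) {ε : ℝ} (hφ : HasDerivAt φ φ' (ε * x)) :
    deriv (fun y : ℝ ↦ Complex.exp (β * y ^ 2) * φ (ε * y)) x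
      = Complex.exp (β * x ^ 2) * (2 * β * x * φ (ε * x) + ε * φ') := by
  have hscaled : HasDerivAt (fun y : ℝ ↦ φ (ε * y)) (ε * φ') x := by
    simpa [Function.comp_def] using hφ.scomp x ((hasDerivAt_id x).const_mul ε)
  exact (hasDerivAt_cexp_sq_mul β hscaled).deriv

theorem ahat_cexp_psiExponent_mul (a c d κ' : ℝ) (hκ : 0 < κ) (hω₀ : 0 < ω₀)
    (hφ : HasDerivAt φ φ' (eps10 κ ω₀ * x)) :
    ahat ω₀ a c d κ κ'
        (fun y : ℝ ↦ Complex.exp (psiExponent a c d κ κ' ω₀ * y ^ 2) * φ (eps10 κ ω₀ * y)) x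
      = Complex.exp (psiExponent a c d κ κ' ω₀ * x ^ 2) * (φ' / √2) := by
  have hε : (eps10 κ ω₀ : ℂ) ≠ 0 := mod_cast (eps10_pos hκ hω₀).ne'
  rw [ahat_eq_deriv_sub _ _ _ _ _ _ _ hκ.ne', deriv_cexp_sq_mul_comp_mul _ hφ]
  field_simp
  ring

theorem adag_cexp_psiExponent_mul (a c d κ' : ℝ) (hκ : 0 < κ) (hω₀ : 0 < ω₀)
    (hφ : HasDerivAt φ φ' (eps10 κ ω₀ * x)) :
    adag ω₀ a c d κ κ'
        (fun y : ℝ ↦ Complex.exp (psiExponent a c d κ κ' ω₀ * y ^ 2) * φ (eps10 κ ω₀ * y)) x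
      = Complex.exp (psiExponent a c d κ κ' ω₀ * x ^ 2)
        * ((2 * (eps10 κ ω₀ * x) * φ (eps10 κ ω₀ * x) - φ') / √2) := by
  have hε : (eps10 κ ω₀ : ℂ) ≠ 0 := mod_cast (eps10_pos hκ hω₀).ne'
  rw [adag_eq_neg_deriv_add _ _ _ _ _ _ _ hκ.ne', deriv_cexp_sq_mul_comp_mul _ hφ,
    eq_sub_of_add_eq' (psiExponent_add_conj a c d κ κ' ω₀)]
  field_simp
  ring

end Conjugation

/-- the ladder operators act on the normalized eigenfunctions by
âΨₙ = √n·Ψₙ₋₁ (n ≥ 1) and â†Ψₙ = √(n+1)·Ψₙ₊₁. -/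
theorem statement_10
    (a c d κ κ' ω₀ : ℝ) (ha : a ≠ 0) (hκ : 0 < κ) (hω₀ : 0 < ω₀) :
    (∀ n : ℕ, 1 ≤ n → ∀ x : ℝ,
        ahat ω₀ a c d κ κ' (Psi10 a c d κ κ' ω₀ n) x
          = (Real.sqrt n : ℂ) * Psi10 a c d κ κ' ω₀ (n - 1) x) ∧
    (∀ n : ℕ, ∀ x : ℝ,
        adag ω₀ a c d κ κ' (Psi10 a c d κ κ' ω₀ n) x
          = (Real.sqrt (n + 1) : ℂ) * Psi10 a c d κ κ' ω₀ (n + 1) x) := by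
  have hasDerivAt_amplitude (n : ℕ) (ξ : ℝ) :
      HasDerivAt (fun y ↦ (psiAmplitude κ ω₀ n y : ℂ)) (deriv (psiAmplitude κ ω₀ n) ξ : ℝ) ξ :=
    (differentiable_psiAmplitude κ ω₀ n ξ).hasDerivAt.ofReal_comp
  have sqrt_two_ne_zero : (√2 : ℂ) ≠ 0 := by simp
  simp only [Psi10_eq_cexp_mul_psiAmplitude]
  constructor
  · intro n hn x
    obtain ⟨m, rfl⟩ := Nat.exists_eq_add_of_le' hn
    rw [ahat_cexp_psiExponent_mul a c d κ' hκ hω₀ (hasDerivAt_amplitude (m + 1) _),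
      deriv_psiAmplitude_succ, Complex.ofReal_mul, mul_div_cancel_left₀ _ sqrt_two_ne_zero]
    push_cast
    exact mul_left_comm ..
  · intro n x
    have raise := congrArg ((↑) : ℝ → ℂ)
      (two_mul_psiAmplitude_sub_deriv κ ω₀ n (eps10 κ ω₀ * x))
    push_cast at raise
    rw [adag_cexp_psiExponent_mul a c d κ' hκ hω₀ (hasDerivAt_amplitude n _), raise,
      mul_div_cancel_left₀ _ sqrt_two_ne_zero]
    exact mul_left_comm ..
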